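/- Let F be a geodesic line foliation of a complete Riemannian plane M. Then the leaf space M/F, equipped with the quotient topology, is Hausdorff, and is homeomorphic to the real line ℝ. -/

import Mathlib

open Set Filter MeasureTheory Metric
open scoped ENNReal NNReal Topology

/-- A (geodesic) line in a metric space: a map `γ : ℝ → X` with
`d(γ s, γ t) = |s - t|` for all `s, t`, i.e. an isometric embedding of `ℝ`
(in a Riemannian manifold such a curve is automatically a geodesic that
minimizes the distance between any two of its points). -/
def IsLine {X : Type} [MetricSpace X] (γ : ℝ → X) : Prop :=
  ∀ s t : ℝ, dist (γ s) (γ t) = |s - t|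

/-- A (geodesic) ray: a map `γ : ℝ → X` with `d(γ s, γ t) = |s - t|`
for all `s, t ≥ 0`, i.e. an isometric embedding of `[0, ∞)`. -/
def IsRay {X : Type} [MetricSpace X] (γ : ℝ → X) : Prop :=
  ∀ s t : ℝ, 0 ≤ s → 0 ≤ t → dist (γ s) (γ t) = |s - t|

/-- A minimizing (unit-speed) geodesic segment defined on `[a, b]`. -/
def IsMinimizingSegment {X : Type} [MetricSpace X] (σ : ℝ → X) (a b : ℝ) : Prop :=
  ∀ s ∈ Set.Icc a b, ∀ t ∈ Set.Icc a b, dist (σ s) (σ t) = |s - t|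

/-- Two rays are asymptotes if they stay within bounded distance of each other. -/
def Asymptotic {X : Type} [MetricSpace X] (γ σ : ℝ → X) : Prop :=
  ∃ C : ℝ, 0 < C ∧ ∀ t : ℝ, 0 ≤ t → dist (γ t) (σ t) ≤ C

/-- A set is geodesically convex if every minimizing geodesic segment
between two of its points is contained in it. -/
def GeodesicallyConvex {X : Type} [MetricSpace X] (A : Set X) : Prop :=
  ∀ (σ : ℝ → X) (a b : ℝ), a ≤ b → IsMinimizingSegment σ a b →
    σ a ∈ A → σ b ∈ A → ∀ t ∈ Set.Icc a b, σ t ∈ A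

/-- Abstract packaging of a complete Riemannian surface: the underlying metric
space of the Riemannian metric, together with its geodesics, its Gaussian
curvature, its Riemannian area measure, the Riemannian angle, and the
(differential-geometric, hence here abstractly recorded) property of having
no conjugate points. -/
structure RiemannianSurface where
  /-- the underlying set of points -/
  M : Type
  /-- the distance function induced by the Riemannian metric -/
  [metric : MetricSpace M]
  [mble : MeasurableSpace M]
  borel : BorelSpace M
  /-- the Riemannian metric is complete -/
  complete : CompleteSpace M
  /-- the complete unit-speed geodesics of the Riemannian metric -/
  IsGeodesic : (ℝ → M) → Prop
  /-- the unit-speed geodesic segments `σ : [a, b] → M` of the Riemannian metric -/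
  IsGeodesicSegment : (ℝ → M) → ℝ → ℝ → Prop
  /-- a metric line is a (complete, globally minimizing) geodesic -/
  line_isGeodesic : ∀ γ : ℝ → M, IsLine γ → IsGeodesic γ
  /-- the restriction of a complete geodesic to an interval is a geodesic segment -/
  geodesic_isGeodesicSegment : ∀ (γ : ℝ → M) (a b : ℝ), IsGeodesic γ → IsGeodesicSegment γ a b
  /-- a minimizing segment is a geodesic segment -/
  minimizing_isGeodesicSegment : ∀ (σ : ℝ → M) (a b : ℝ),
    IsMinimizingSegment σ a b → IsGeodesicSegment σ a b
  /-- the Gaussian curvature -/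
  K : M → ℝ
  /-- the Riemannian area measure -/
  area : MeasureTheory.Measure M
  /-- `angle p x y` is the angle `∠ₚ(x, y)` at `p` subtended by `x` and `y`
  (the angle at `p` between the initial directions of minimizing geodesics
  from `p` to `x` and to `y`) -/
  angle : M → M → M → ℝ
  /-- the Riemannian metric has no conjugate points: no geodesic contains a pair
  of mutually conjugate points -/
  NoConjugatePoints : Prop

attribute [instance] RiemannianSurface.metric RiemannianSurface.mble

namespace RiemannianSurface

variable (S : RiemannianSurface)

/-- the total positive curvature `c₊(M) = ∫_M K⁺ dμ`, as an extended nonnegative real -/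
noncomputable def cPlus : ℝ≥0∞ := ∫⁻ x, ENNReal.ofReal (S.K x) ∂S.area

/-- `∫_M (-K⁻) dμ = -c₋(M)`, the absolute value of the total negative curvature,
as an extended nonnegative real -/
noncomputable def cMinus : ℝ≥0∞ := ∫⁻ x, ENNReal.ofReal (-S.K x) ∂S.area

/-- `M` admits total curvature if at least one of `c₊(M)`, `c₋(M)` is finite -/
def AdmitsTotalCurvature : Prop := S.cPlus ≠ ⊤ ∨ S.cMinus ≠ ⊤

/-- the total curvature `c(M) = c₊(M) + c₋(M) = ∫_M K dμ`, as an extended real -/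
noncomputable def totalCurvature : EReal := (S.cPlus : EReal) - (S.cMinus : EReal)

/-- the total curvature `c(A) = ∫_A K dμ` of a region `A ⊆ M`, as an extended real -/
noncomputable def cOn (A : Set S.M) : EReal :=
  ((∫⁻ x in A, ENNReal.ofReal (S.K x) ∂S.area : ℝ≥0∞) : EReal) -
    ((∫⁻ x in A, ENNReal.ofReal (-S.K x) ∂S.area : ℝ≥0∞) : EReal)

/-- `M` satisfies the visibility axiom at `p`: for every `ε > 0` there is `R > 0`
such that every geodesic segment staying at distance `> R` from `p` subtends an
angle at most `ε` at `p`. -/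
def VisibilityAt (p : S.M) : Prop :=
  ∀ ε : ℝ, 0 < ε → ∃ R : ℝ, 0 < R ∧
    ∀ (σ : ℝ → S.M) (a b : ℝ), a ≤ b → S.IsGeodesicSegment σ a b →
      (∀ t ∈ Set.Icc a b, R < dist p (σ t)) → S.angle p (σ a) (σ b) ≤ ε

end RiemannianSurface

/-- A foliation of the surface all of whose leaves are geodesic lines:
a partition of `M` into leaves, each of which is the image of a geodesic line,
which is locally trivial (each point has a foliated chart whose plaques lie
in the leaves). -/
structure GeodesicLineFoliation (S : RiemannianSurface) where
  /-- the leaves of the foliation -/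
  leaves : Set (Set S.M)
  covers : ∀ x : S.M, ∃ L ∈ leaves, x ∈ L
  eq_of_inter : ∀ L₁ ∈ leaves, ∀ L₂ ∈ leaves, (L₁ ∩ L₂).Nonempty → L₁ = L₂
  /-- every leaf is a geodesic line -/
  leaf_is_geodesic_line : ∀ L ∈ leaves,
    ∃ γ : ℝ → S.M, IsLine γ ∧ S.IsGeodesic γ ∧ Set.range γ = L
  /-- local triviality: foliated charts whose plaques lie in leaves -/
  locally_trivial : ∀ x : S.M, ∃ U : Set S.M, IsOpen U ∧ x ∈ U ∧
    ∃ φ : ↥U ≃ₜ (ℝ × ℝ), ∀ c : ℝ, ∃ L ∈ leaves, ∀ t : ℝ, (φ.symm (t, c)).1 ∈ L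

/-- any two leaves of the foliation are at finite Hausdorff distance from each other -/
def GeodesicLineFoliation.BoundedHausdorffDistance {S : RiemannianSurface}
    (F : GeodesicLineFoliation S) : Prop :=
  ∀ L₁ ∈ F.leaves, ∀ L₂ ∈ F.leaves, EMetric.hausdorffEdist L₁ L₂ ≠ ⊤

theorem LeafAux.real_open_image {U : Set ℝ} (hU : IsOpen U) {f : ℝ → ℝ} (hc : ContinuousOn f U)
    (hi : InjOn f U) : IsOpen (f '' U) := by
  rw [isOpen_iff_mem_nhds]
  rintro _ ⟨x, hx, rfl⟩
  obtain ⟨δ, hδ, hs⟩ := Metric.nhds_basis_closedBall.mem_iff.1 (hU.mem_nhds hx)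
  rw [Real.closedBall_eq_Icc] at hs
  have hle : x - δ ≤ x + δ := by linarith
  have hc' := hc.mono hs
  have hi' := hi.mono hs
  have m1 : x - δ ∈ Icc (x - δ) (x + δ) := ⟨by linarith, by linarith⟩
  have m2 : x ∈ Icc (x - δ) (x + δ) := ⟨by linarith, by linarith⟩
  have m3 : x + δ ∈ Icc (x - δ) (x + δ) := ⟨by linarith, by linarith⟩
  rcases ContinuousOn.strictMonoOn_of_injOn_Icc' hle hc' hi' with h | h
  · have h1 := h m1 m2 (by linarith)
    have h2 := h m2 m3 (by linarith)
    exact mem_of_superset (Icc_mem_nhds h1 h2)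
      ((intermediate_value_Icc hle hc').trans (image_mono hs))
  · have h1 := h m1 m2 (by linarith)
    have h2 := h m2 m3 (by linarith)
    exact mem_of_superset (Icc_mem_nhds h2 h1)
      ((intermediate_value_Icc' hle hc').trans (image_mono hs))

theorem LeafAux.addCircle_coe_eq {T x y : ℝ} (h : (x : AddCircle T) = (y : AddCircle T)) :
    ∃ n : ℤ, x = y + n * T := by
  have h' : ((x - y : ℝ) : AddCircle T) = 0 := by
    rw [AddCircle.coe_sub, h, sub_self]
  obtain ⟨n, hn⟩ := (AddCircle.coe_eq_zero_iff T).1 h'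
  refine ⟨n, ?_⟩
  rw [zsmul_eq_mul] at hn
  linarith

section
variable {Q : Type*} [TopologicalSpace Q]

theorem LeafAux.open_image (loc : ∀ q : Q, ∃ E : OpenPartialHomeomorph Q ℝ, q ∈ E.source)
    {O : Set Q} (hO : IsOpen O) {H : Q → ℝ} (hc : ContinuousOn H O) (hi : InjOn H O) :
    IsOpen (H '' O) := by
  rw [isOpen_iff_mem_nhds]
  rintro _ ⟨q, hq, rfl⟩
  obtain ⟨E, hE⟩ := loc q
  have hW : IsOpen (E.target ∩ E.symm ⁻¹' O) := E.isOpen_inter_preimage_symm hO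
  have h := LeafAux.real_open_image (f := H ∘ E.symm) hW
    (hc.comp (E.continuousOn_symm.mono inter_subset_left) (fun x hx => hx.2))
    (by
      intro x hx y hy hxy
      have := hi hx.2 hy.2 hxy
      exact E.symm.injOn hx.1 hy.1 this)
  refine mem_of_superset (h.mem_nhds ⟨E q, ⟨E.map_source hE, ?_⟩, ?_⟩) ?_
  · simpa [E.left_inv hE] using hq
  · simp [E.left_inv hE]
  · rintro _ ⟨t, ht, rfl⟩
    exact ⟨_, ht.2, rfl⟩

theorem LeafAux.mk_arc (loc : ∀ q : Q, ∃ E : OpenPartialHomeomorph Q ℝ, q ∈ E.source)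
    {V : Set Q} (hV : IsOpen V) {H : Q → ℝ} (hc : ContinuousOn H V) {I : Set ℝ}
    (hb : BijOn H V I) [Nonempty Q] :
    ∃ E : OpenPartialHomeomorph Q ℝ, E.source = V ∧ E.target = I ∧ ∀ x, E x = H x := by
  refine ⟨OpenPartialHomeomorph.ofContinuousOpenRestrict hb.toPartialEquiv hc ?_ hV, rfl, rfl,
    fun x => rfl⟩
  intro O hO
  change IsOpen ((fun x : V => H x) '' O)
  have : (fun x : V => H x) '' O = H '' (Subtype.val '' O) := by
    rw [image_image]; rfl
  rw [this]
  have hs : Subtype.val '' O ⊆ V := by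
    rintro _ ⟨x, _, rfl⟩; exact x.2
  exact LeafAux.open_image loc (hV.isOpenMap_subtype_val O hO) (hc.mono hs) (hb.injOn.mono hs)

theorem LeafAux.ext [T2Space Q] [ConnectedSpace Q]
    (hlift : ∀ T : ℝ, 0 < T → ∀ f : Q → AddCircle T, Continuous f →
      ∃ F : Q → ℝ, Continuous F ∧ ∀ x, (F x : AddCircle T) = f x)
    (E : OpenPartialHomeomorph Q ℝ) {a b : ℝ} (hab : a < b) (hE : E.target = Ioo a b) :
    ∃ F : Q → ℝ, Continuous F ∧ (∀ x ∈ E.source, F x = E x) ∧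
      ∀ x, x ∉ E.source → F x = a ∨ F x = b := by
  classical
  set T := b - a with hT
  have hT0 : 0 < T := by linarith
  let f : Q → AddCircle T := fun x => if x ∈ E.source then (E x : AddCircle T) else (a : AddCircle T)
  have f1 : ∀ x ∈ E.source, f x = (E x : AddCircle T) := fun x hx => if_pos hx
  have f2 : ∀ x, x ∉ E.source → f x = (a : AddCircle T) := fun x hx => if_neg hx
  have hcoe : Continuous (fun y : ℝ => (y : AddCircle T)) := AddCircle.continuous_mk' T
  have hba : (b : AddCircle T) = (a : AddCircle T) := by
    have : b = a + T := by rw [hT]; ring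
    rw [this, AddCircle.coe_add_period]
  have hf : Continuous f := by
    rw [continuous_iff_continuousAt]
    intro x
    by_cases hx : x ∈ E.source
    · have h1 : ContinuousAt (fun y => (E y : AddCircle T)) x :=
        hcoe.continuousAt.comp (E.continuousAt hx)
      refine h1.congr ?_
      filter_upwards [E.open_source.mem_nhds hx] with y hy
      exact (f1 y hy).symm
    · intro N hN
      rw [f2 x hx] at hN
      have n1 : (fun y : ℝ => (y : AddCircle T)) ⁻¹' N ∈ 𝓝 a := hcoe.continuousAt hN
      have n2 : (fun y : ℝ => (y : AddCircle T)) ⁻¹' N ∈ 𝓝 b := by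
        apply hcoe.continuousAt
        change N ∈ 𝓝 (b : AddCircle T)
        rw [hba]; exact hN
      obtain ⟨δ₁, hδ₁, k1⟩ := Metric.mem_nhds_iff.1 n1
      obtain ⟨δ₂, hδ₂, k2⟩ := Metric.mem_nhds_iff.1 n2
      rw [Real.ball_eq_Ioo] at k1 k2
      have hK : IsCompact (E.symm '' (Icc (a + δ₁ / 2) (b - δ₂ / 2))) := by
        refine isCompact_Icc.image_of_continuousOn (E.continuousOn_symm.mono ?_)
        rw [hE]
        intro y hy
        exact ⟨by linarith [hy.1], by linarith [hy.2]⟩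
      have hx' : x ∈ (E.symm '' (Icc (a + δ₁ / 2) (b - δ₂ / 2)))ᶜ := by
        rintro ⟨y, hy, rfl⟩
        apply hx
        apply E.map_target
        rw [hE]
        exact ⟨by linarith [hy.1], by linarith [hy.2]⟩
      rw [mem_map]
      filter_upwards [hK.isClosed.isOpen_compl.mem_nhds hx'] with y hy
      by_cases hys : y ∈ E.source
      · change f y ∈ N
        rw [f1 y hys]
        have ht : E y ∈ Ioo a b := hE ▸ E.map_source hys
        by_cases c1 : E y < a + δ₁ / 2
        · exact k1 ⟨by linarith [ht.1], by linarith⟩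
        · by_cases c2 : b - δ₂ / 2 < E y
          · exact k2 ⟨by linarith, by linarith [ht.2]⟩
          · exact absurd ⟨E y, ⟨not_lt.1 c1, not_lt.1 c2⟩, E.left_inv hys⟩ hy
      · change f y ∈ N
        rw [f2 y hys]
        exact mem_of_mem_nhds hN
  obtain ⟨F₀, hF₀, hF₀'⟩ := hlift T hT0 f hf
  set m := (a + b) / 2 with hm
  have hmI : m ∈ E.target := by rw [hE]; exact ⟨by linarith, by linarith⟩
  have hmS := E.map_target hmI
  obtain ⟨n, hn⟩ := LeafAux.addCircle_coe_eq ((hF₀' (E.symm m)).trans (f1 _ hmS))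
  rw [E.right_inv hmI] at hn
  let F : Q → ℝ := fun x => F₀ x - n * T
  have hF : Continuous F := by fun_prop
  have hFf : ∀ x, (F x : AddCircle T) = f x := by
    intro x
    rw [← hF₀' x]
    change ((F₀ x - n * T : ℝ) : AddCircle T) = _
    rw [AddCircle.coe_sub]
    have : ((n * T : ℝ) : AddCircle T) = 0 := by
      rw [AddCircle.coe_eq_zero_iff]; exact ⟨n, by simp⟩
    rw [this, sub_zero]
  have hFm : F (E.symm m) = m := by simp only [F]; linarith
  have hpre : IsPreconnected E.source := by
    rw [← E.symm_image_target_eq_source, hE]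
    exact isPreconnected_Ioo.image _ (hE ▸ E.continuousOn_symm)
  have hFE : EqOn F E E.source := by
    refine (AddCircle.isCoveringMap_coe T).eqOn_of_comp_eqOn hpre hF.continuousOn E.continuousOn
      ?_ hmS ?_
    · intro x hx
      simp only [Function.comp]
      rw [hFf, f1 x hx]
    · rw [hFm, E.right_inv hmI]
  refine ⟨F, hF, hFE, ?_⟩
  intro x hx
  obtain ⟨k, hk⟩ := LeafAux.addCircle_coe_eq ((hFf x).trans (f2 x hx))
  have key : ∀ z (j : ℤ), F z = m + j * T → j = 0 := by
    intro z j hz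
    by_cases hzs : z ∈ E.source
    · have h1 : E z ∈ Ioo a b := hE ▸ E.map_source hzs
      rw [← hFE hzs, hz] at h1
      have h2 : (j : ℝ) < 1 := by
        by_contra hc
        push Not at hc
        nlinarith [h1.2]
      have h3 : (-1 : ℝ) < j := by
        by_contra hc
        push Not at hc
        nlinarith [h1.1]
      have h2' : j < 1 := by exact_mod_cast h2
      have h3' : -1 < j := by exact_mod_cast h3
      omega
    · obtain ⟨i, hi⟩ := LeafAux.addCircle_coe_eq ((hFf z).trans (f2 z hzs))
      exfalso
      have : ((1 : ℝ) + 2 * j - 2 * i) * T = 0 := by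
        rw [hz] at hi
        have : m = a + T / 2 := by rw [hm, hT]; ring
        rw [this] at hi
        linarith
      have := (mul_eq_zero.1 this).resolve_right hT0.ne'
      have h' : (1 : ℤ) + 2 * j - 2 * i = 0 := by exact_mod_cast this
      omega
  have hmT : m = a + T / 2 := by rw [hm, hT]; ring
  have ivt : ∀ v, (v ∈ uIcc (F (E.symm m)) (F x)) → ∃ z, F z = v := by
    intro v hv
    have := isPreconnected_univ.image F hF.continuousOn
    rw [image_univ] at this
    exact this.ordConnected.uIcc_subset (mem_range_self _) (mem_range_self _) hv
  have hk1 : k < 2 := by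
    by_contra hc
    push Not at hc
    have hc' : (2 : ℝ) ≤ k := by exact_mod_cast hc
    obtain ⟨z, hz⟩ := ivt (m + (1 : ℤ) * T) (by
      rw [hFm, hk]; push_cast
      refine Icc_subset_uIcc ⟨by linarith, by nlinarith⟩)
    have := key z 1 hz
    omega
  have hk2 : -1 < k := by
    by_contra hc
    push Not at hc
    have hc' : (k : ℝ) ≤ -1 := by exact_mod_cast hc
    obtain ⟨z, hz⟩ := ivt (m + (-1 : ℤ) * T) (by
      rw [hFm, hk]; push_cast
      refine Icc_subset_uIcc' ⟨by nlinarith, by linarith⟩)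
    have := key z (-1) hz
    omega
  have : k = 0 ∨ k = 1 := by omega
  rcases this with rfl | rfl
  · left; simp [hk]
  · right; rw [hk, hT]; push_cast; ring

theorem LeafAux.right_ext [T2Space Q] [ConnectedSpace Q]
    (loc : ∀ q : Q, ∃ E : OpenPartialHomeomorph Q ℝ, q ∈ E.source)
    (hlift : ∀ T : ℝ, 0 < T → ∀ f : Q → AddCircle T, Continuous f →
      ∃ F : Q → ℝ, Continuous F ∧ ∀ x, (F x : AddCircle T) = f x)
    (E : OpenPartialHomeomorph Q ℝ) {a b : ℝ} (hab : a < b) (hE : E.target = Ioo a b)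
    (E' : OpenPartialHomeomorph Q ℝ) {c d : ℝ} (hE' : E'.target = Ioo c d)
    {t₀ : ℝ} (ht₀ : t₀ ∈ Ioo c d) (hm : E'.symm t₀ ∈ E.source) :
    ∃ (E'' : OpenPartialHomeomorph Q ℝ) (a' b' : ℝ), a' < b' ∧ E''.target = Ioo a' b' ∧
      E''.source = E.source ∪ E'.symm '' (Ico t₀ d) ∧ ∀ x ∈ E.source, E'' x = E x := by
  by_cases hsub : ∀ t ∈ Ico t₀ d, E'.symm t ∈ E.source
  · refine ⟨E, a, b, hab, hE, ?_, fun _ _ => rfl⟩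
    rw [eq_comm, union_eq_left]
    rintro _ ⟨t, ht, rfl⟩
    exact hsub t ht
  push Not at hsub
  obtain ⟨t₁, ht₁, hn₁⟩ := hsub
  have hcd : c < d := ht₀.1.trans ht₀.2
  obtain ⟨F, hF, hFE, hFn⟩ := LeafAux.ext hlift E hab hE
  obtain ⟨G, hG, hGE, hGn⟩ := LeafAux.ext hlift E' hcd hE'
  have hP : IsOpen (E'.target ∩ E'.symm ⁻¹' E.source) := E'.isOpen_inter_preimage_symm E.open_source
  have hB : IsCompact (Icc t₀ t₁ \ (E'.target ∩ E'.symm ⁻¹' E.source)) := isCompact_Icc.diff hP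
  obtain ⟨ts, hts, hleast⟩ := hB.exists_isLeast ⟨t₁, ⟨ht₁.1, le_rfl⟩, fun h => hn₁ h.2⟩
  have htsd : ts < d := hts.1.2.trans_lt ht₁.2
  have htsT : ts ∈ E'.target := by rw [hE']; exact ⟨ht₀.1.trans_le hts.1.1, htsd⟩
  have htsn : E'.symm ts ∉ E.source := fun h => hts.2 ⟨htsT, h⟩
  have hlow : ∀ t ∈ Ico t₀ ts, E'.symm t ∈ E.source := by
    intro t ht
    by_contra hc
    have := hleast ⟨⟨ht.1, ht.2.le.trans hts.1.2⟩, fun h => hc h.2⟩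
    exact absurd ht.2 (not_lt.2 this)
  have hGt : ∀ t ∈ Ioo c d, G (E'.symm t) = t := by
    intro t ht
    have ht' : t ∈ E'.target := hE' ▸ ht
    rw [hGE _ (E'.map_target ht'), E'.right_inv ht']
  have htsI : ts ∈ Ioo c d := hE' ▸ htsT
  have hlt : t₀ < ts := by
    rcases hts.1.1.lt_or_eq with h | h
    · exact h
    · exact absurd (h ▸ hm) htsn
  have hpre : IsPreconnected E.source := by
    rw [← E.symm_image_target_eq_source, hE]
    exact isPreconnected_Ioo.image _ (hE ▸ E.continuousOn_symm)
  have hGV : ∀ x ∈ E.source, G x < ts := by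
    intro x hx
    by_contra hc
    push Not at hc
    have hoc := (hpre.image G hG.continuousOn).ordConnected
    have : ts ∈ G '' E.source := hoc.out (mem_image_of_mem G hm) (mem_image_of_mem G hx)
      ⟨by rw [hGt t₀ ht₀]; exact hlt.le, hc⟩
    obtain ⟨y, hy, hyt⟩ := this
    by_cases hys : y ∈ E'.source
    · rw [hGE y hys] at hyt
      rw [← hyt, E'.left_inv hys] at htsn
      exact htsn hy
    · rcases hGn y hys with h | h
      · linarith [htsI.1]
      · linarith
  have hWn : ∀ t ∈ Ico ts d, E'.symm t ∉ E.source := by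
    intro t ht h
    have := hGV _ h
    rw [hGt t ⟨htsI.1.trans_le ht.1, ht.2⟩] at this
    exact absurd ht.1 (not_le.2 this)
  have hset : E.source ∪ E'.symm '' (Ico t₀ d) = E.source ∪ E'.symm '' (Ico ts d) := by
    apply Subset.antisymm
    · rintro x (hx | ⟨t, ht, rfl⟩)
      · exact Or.inl hx
      · by_cases h : t < ts
        · exact Or.inl (hlow t ⟨ht.1, h⟩)
        · exact Or.inr ⟨t, ⟨not_lt.1 h, ht.2⟩, rfl⟩
    · rintro x (hx | ⟨t, ht, rfl⟩)
      · exact Or.inl hx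
      · exact Or.inr ⟨t, ⟨hlt.le.trans ht.1, ht.2⟩, rfl⟩
  have hopen : IsOpen (E.source ∪ E'.symm '' (Ico ts d)) := by
    have : E.source ∪ E'.symm '' (Ico ts d) = E.source ∪ E'.symm '' (Ioo t₀ d) := by
      rw [← hset]
      apply Subset.antisymm
      · rintro x (hx | ⟨t, ht, rfl⟩)
        · exact Or.inl hx
        · rcases ht.1.lt_or_eq with h | h
          · exact Or.inr ⟨t, ⟨h, ht.2⟩, rfl⟩
          · left; rw [← h]; exact hm
      · exact union_subset_union_right _ (image_mono Ioo_subset_Ico_self)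
    rw [this]
    refine E.open_source.union (E'.symm.isOpen_image_of_subset_source isOpen_Ioo ?_)
    rw [OpenPartialHomeomorph.symm_source, hE']
    exact Ioo_subset_Ioo_left ht₀.1.le
  have hFW : ∀ t ∈ Ico ts d, F (E'.symm t) = F (E'.symm ts) := by
    have hpc : IsPreconnected ((fun t => F (E'.symm t)) '' (Ico ts d)) := by
      refine isPreconnected_Ico.image _ (hF.comp_continuousOn (E'.continuousOn_symm.mono ?_))
      rw [hE']
      intro t ht
      exact ⟨htsI.1.trans_le ht.1, ht.2⟩
    intro t ht
    have hfin : ((fun t => F (E'.symm t)) '' (Ico ts d)).Finite := by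
      refine (Set.toFinite {a, b}).subset ?_
      rintro _ ⟨s, hs, rfl⟩
      exact hFn _ (hWn s hs)
    exact (hfin.countable.isTotallyDisconnected _ Subset.rfl hpc) ⟨t, ht, rfl⟩
      ⟨ts, ⟨le_rfl, htsd⟩, rfl⟩
  have hEI : ∀ x ∈ E.source, E x ∈ Ioo a b := fun x hx => hE ▸ E.map_source hx
  have : Nonempty Q := ⟨E'.symm ts⟩
  rw [hset]
  rcases hFn _ htsn with hcase | hcase
  · let H : Q → ℝ := fun x => F x - max (G x - ts) 0
    have hH : Continuous H := by fun_prop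
    have HV : ∀ x ∈ E.source, H x = E x := by
      intro x hx
      simp only [H]
      rw [hFE x hx, max_eq_right (by linarith [hGV x hx]), sub_zero]
    have HW : ∀ t ∈ Ico ts d, H (E'.symm t) = a - (t - ts) := by
      intro t ht
      simp only [H]
      rw [hFW t ht, hcase, hGt t ⟨htsI.1.trans_le ht.1, ht.2⟩, max_eq_left (by linarith [ht.1])]
    have hbij : BijOn H (E.source ∪ E'.symm '' (Ico ts d)) (Ioo (a - (d - ts)) b) := by
      refine ⟨?_, ?_, ?_⟩
      · rintro x (hx | ⟨t, ht, rfl⟩)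
        · rw [HV x hx]
          exact ⟨by linarith [(hEI x hx).1], (hEI x hx).2⟩
        · rw [HW t ht]
          exact ⟨by linarith [ht.2], by linarith [ht.1]⟩
      · rintro x (hx | ⟨t, ht, rfl⟩) y (hy | ⟨s, hs, rfl⟩) hxy
        · rw [HV x hx, HV y hy] at hxy
          exact E.injOn hx hy hxy
        · rw [HV x hx, HW s hs] at hxy
          linarith [(hEI x hx).1, hs.1]
        · rw [HV y hy, HW t ht] at hxy
          linarith [(hEI y hy).1, ht.1]
        · rw [HW t ht, HW s hs] at hxy
          have : t = s := by linarith
          rw [this]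
      · intro v hv
        by_cases h : a < v
        · have hv' : v ∈ E.target := by rw [hE]; exact ⟨h, hv.2⟩
          refine ⟨E.symm v, Or.inl (E.map_target hv'), ?_⟩
          rw [HV _ (E.map_target hv'), E.right_inv hv']
        · push Not at h
          have : a - v + ts ∈ Ico ts d := ⟨by linarith, by linarith [hv.1]⟩
          refine ⟨E'.symm (a - v + ts), Or.inr ⟨_, this, rfl⟩, ?_⟩
          rw [HW _ this]; ring
    obtain ⟨E'', h1, h2, h3⟩ := LeafAux.mk_arc loc hopen hH.continuousOn hbij
    exact ⟨E'', _, _, by linarith, h2, h1, fun x hx => (h3 x).trans (HV x hx)⟩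
  · let H : Q → ℝ := fun x => F x + max (G x - ts) 0
    have hH : Continuous H := by fun_prop
    have HV : ∀ x ∈ E.source, H x = E x := by
      intro x hx
      simp only [H]
      rw [hFE x hx, max_eq_right (by linarith [hGV x hx]), add_zero]
    have HW : ∀ t ∈ Ico ts d, H (E'.symm t) = b + (t - ts) := by
      intro t ht
      simp only [H]
      rw [hFW t ht, hcase, hGt t ⟨htsI.1.trans_le ht.1, ht.2⟩, max_eq_left (by linarith [ht.1])]
    have hbij : BijOn H (E.source ∪ E'.symm '' (Ico ts d)) (Ioo a (b + (d - ts))) := by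
      refine ⟨?_, ?_, ?_⟩
      · rintro x (hx | ⟨t, ht, rfl⟩)
        · rw [HV x hx]
          exact ⟨(hEI x hx).1, by linarith [(hEI x hx).2]⟩
        · rw [HW t ht]
          exact ⟨by linarith [ht.1], by linarith [ht.2]⟩
      · rintro x (hx | ⟨t, ht, rfl⟩) y (hy | ⟨s, hs, rfl⟩) hxy
        · rw [HV x hx, HV y hy] at hxy
          exact E.injOn hx hy hxy
        · rw [HV x hx, HW s hs] at hxy
          linarith [(hEI x hx).2, hs.1]
        · rw [HV y hy, HW t ht] at hxy
          linarith [(hEI y hy).2, ht.1]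
        · rw [HW t ht, HW s hs] at hxy
          have : t = s := by linarith
          rw [this]
      · intro v hv
        by_cases h : v < b
        · have hv' : v ∈ E.target := by rw [hE]; exact ⟨hv.1, h⟩
          refine ⟨E.symm v, Or.inl (E.map_target hv'), ?_⟩
          rw [HV _ (E.map_target hv'), E.right_inv hv']
        · push Not at h
          have : v - b + ts ∈ Ico ts d := ⟨by linarith, by linarith [hv.2]⟩
          refine ⟨E'.symm (v - b + ts), Or.inr ⟨_, this, rfl⟩, ?_⟩
          rw [HW _ this]; ring
    obtain ⟨E'', h1, h2, h3⟩ := LeafAux.mk_arc loc hopen hH.continuousOn hbij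
    exact ⟨E'', _, _, by linarith, h2, h1, fun x hx => (h3 x).trans (HV x hx)⟩

theorem LeafAux.union_ext [T2Space Q] [ConnectedSpace Q]
    (loc : ∀ q : Q, ∃ E : OpenPartialHomeomorph Q ℝ, q ∈ E.source)
    (hlift : ∀ T : ℝ, 0 < T → ∀ f : Q → AddCircle T, Continuous f →
      ∃ F : Q → ℝ, Continuous F ∧ ∀ x, (F x : AddCircle T) = f x)
    (E : OpenPartialHomeomorph Q ℝ) {a b : ℝ} (hab : a < b) (hE : E.target = Ioo a b)
    (E' : OpenPartialHomeomorph Q ℝ) {c d : ℝ} (hE' : E'.target = Ioo c d)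
    {p : Q} (hp : p ∈ E.source) (hp' : p ∈ E'.source) :
    ∃ (E'' : OpenPartialHomeomorph Q ℝ) (a' b' : ℝ), a' < b' ∧ E''.target = Ioo a' b' ∧
      E''.source = E.source ∪ E'.source ∧ ∀ x ∈ E.source, E'' x = E x := by
  have ht : E' p ∈ Ioo c d := hE' ▸ E'.map_source hp'
  obtain ⟨E₁, a₁, b₁, hab₁, hE₁, hs₁, he₁⟩ := LeafAux.right_ext loc hlift E hab hE E' hE' ht
    (by rwa [E'.left_inv hp'])
  let N := E'.transHomeomorph (Homeomorph.neg ℝ)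
  have hN : N.target = Ioo (-d) (-c) := by
    ext t
    simp only [N, OpenPartialHomeomorph.transHomeomorph_target, hE', mem_preimage, mem_Ioo]
    change c < -t ∧ -t < d ↔ _
    constructor <;> rintro ⟨h1, h2⟩ <;> constructor <;> linarith
  have hNs : ∀ t, N.symm t = E'.symm (-t) := fun t => rfl
  obtain ⟨E₂, a₂, b₂, hab₂, hE₂, hs₂, he₂⟩ := LeafAux.right_ext loc hlift E₁ hab₁ hE₁ N hN
    (t₀ := - E' p) ⟨by linarith [ht.2], by linarith [ht.1]⟩
    (by rw [hNs, neg_neg, E'.left_inv hp', hs₁]; exact Or.inl hp)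
  refine ⟨E₂, a₂, b₂, hab₂, hE₂, ?_, ?_⟩
  · rw [hs₂, hs₁]
    apply Subset.antisymm
    · rintro x ((hx | ⟨t, h, rfl⟩) | ⟨t, h, rfl⟩)
      · exact Or.inl hx
      · right
        apply E'.map_target
        rw [hE']
        exact ⟨ht.1.trans_le h.1, h.2⟩
      · right
        rw [hNs]
        apply E'.map_target
        rw [hE']
        exact ⟨by linarith [h.2], by linarith [h.1, ht.2]⟩
    · rintro x (hx | hx)
      · exact Or.inl (Or.inl hx)
      · have hxI : E' x ∈ Ioo c d := hE' ▸ E'.map_source hx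
        by_cases h : E' p ≤ E' x
        · exact Or.inl (Or.inr ⟨E' x, ⟨h, hxI.2⟩, E'.left_inv hx⟩)
        · push Not at h
          exact Or.inr ⟨- E' x, ⟨by linarith, by linarith [hxI.1]⟩, by
            rw [hNs, neg_neg, E'.left_inv hx]⟩
  · intro x hx
    rw [he₂ x (by rw [hs₁]; exact Or.inl hx), he₁ x hx]

theorem LeafAux.homeo_real [T2Space Q] [ConnectedSpace Q] [LindelofSpace Q]
    (loc' : ∀ q : Q, ∃ (E : OpenPartialHomeomorph Q ℝ) (a b : ℝ), a < b ∧ E.target = Ioo a b ∧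
      q ∈ E.source)
    (hlift : ∀ T : ℝ, 0 < T → ∀ f : Q → AddCircle T, Continuous f →
      ∃ F : Q → ℝ, Continuous F ∧ ∀ x, (F x : AddCircle T) = f x) :
    Nonempty (Q ≃ₜ ℝ) := by
  have loc : ∀ q : Q, ∃ E : OpenPartialHomeomorph Q ℝ, q ∈ E.source := by
    intro q
    obtain ⟨E, _, _, _, _, h⟩ := loc' q
    exact ⟨E, h⟩
  obtain ⟨q₀⟩ : Nonempty Q := inferInstance
  let ι := {E : OpenPartialHomeomorph Q ℝ // ∃ a b : ℝ, a < b ∧ E.target = Ioo a b ∧ q₀ ∈ E.source}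
  have hι : Nonempty ι := by
    obtain ⟨E, a, b, h1, h2, h3⟩ := loc' q₀
    exact ⟨⟨E, a, b, h1, h2, h3⟩⟩
  have hun : (⋃ i : ι, i.1.source) = univ := by
    have hop : IsOpen (⋃ i : ι, i.1.source) := isOpen_iUnion fun i => i.1.open_source
    refine IsClopen.eq_univ ⟨?_, hop⟩ ?_
    · rw [← closure_subset_iff_isClosed]
      intro q hq
      obtain ⟨E', c, d, h1, h2, h3⟩ := loc' q
      obtain ⟨p, hp1, hp2⟩ := mem_closure_iff.1 hq _ E'.open_source h3
      obtain ⟨⟨E, a, b, hab, hE, hq₀⟩, hpE⟩ := mem_iUnion.1 hp2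
      obtain ⟨E'', a', b', hab', hE'', hs, -⟩ := LeafAux.union_ext loc hlift E hab hE E' h2 hpE hp1
      refine mem_iUnion.2 ⟨⟨E'', a', b', hab', hE'', ?_⟩, ?_⟩
      · rw [hs]; exact Or.inl hq₀
      · change q ∈ E''.source
        rw [hs]; exact Or.inr h3
    · obtain ⟨i⟩ := hι
      obtain ⟨a, b, _, _, h⟩ := i.2
      exact ⟨q₀, mem_iUnion.2 ⟨i, h⟩⟩
  obtain ⟨f, hf⟩ := isLindelof_univ.indexed_countable_subcover (fun i : ι => i.1.source)
    (fun i => i.1.open_source) hun.ge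
  have step : ∀ i j : ι, ∃ k : ι, k.1.source = i.1.source ∪ j.1.source ∧
      ∀ x ∈ i.1.source, k.1 x = i.1 x := by
    rintro ⟨E, a, b, hab, hE, hq⟩ ⟨E', c, d, hcd, hE', hq'⟩
    obtain ⟨E'', a', b', hab', hE'', hs, he⟩ := LeafAux.union_ext loc hlift E hab hE E' hE' hq hq'
    exact ⟨⟨E'', a', b', hab', hE'', by rw [hs]; exact Or.inl hq⟩, hs, he⟩
  choose g hg1 hg2 using step
  let V : ℕ → ι := fun n => Nat.rec (f 0) (fun n i => g i (f n)) n
  have hV : ∀ n, V (n + 1) = g (V n) (f n) := fun n => rfl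
  have hmono : ∀ n k x, x ∈ (V n).1.source → x ∈ (V (n + k)).1.source ∧
      (V (n + k)).1 x = (V n).1 x := by
    intro n k x hx
    induction k with
    | zero => exact ⟨hx, rfl⟩
    | succ k ih =>
      rw [← add_assoc, hV]
      refine ⟨?_, ?_⟩
      · rw [hg1]; exact Or.inl ih.1
      · rw [hg2 _ _ _ ih.1, ih.2]
  have hcov : ∀ x, ∃ n, x ∈ (V n).1.source := by
    intro x
    obtain ⟨n, hn⟩ := mem_iUnion.1 (hf (mem_univ x))
    refine ⟨n + 1, ?_⟩
    rw [hV, hg1]; exact Or.inr hn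
  choose N hN using hcov
  let h : Q → ℝ := fun x => (V (N x)).1 x
  have hh : ∀ n x, x ∈ (V n).1.source → h x = (V n).1 x := by
    intro n x hx
    have h1 := (hmono n (N x) x hx).2
    have h2 := (hmono (N x) n x (hN x)).2
    rw [← h1, add_comm n, h2]
  have hc : Continuous h := by
    rw [continuous_iff_continuousAt]
    intro x
    refine ((V (N x)).1.continuousAt (hN x)).congr ?_
    filter_upwards [(V (N x)).1.open_source.mem_nhds (hN x)] with y hy
    exact (hh _ y hy).symm
  have hinj : Function.Injective h := by
    intro x y hxy
    have hx := (hmono (N x) (N y) x (hN x)).1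
    have hy := (hmono (N y) (N x) y (hN y)).1
    rw [add_comm] at hy
    rw [hh _ x hx, hh _ y hy] at hxy
    exact (V (N x + N y)).1.injOn hx hy hxy
  let h' : Q → ℝ := fun x => Real.arctan (h x)
  have hc' : Continuous h' := Real.continuous_arctan.comp hc
  have hinj' : Function.Injective h' := Real.arctan_injective.comp hinj
  have hop : IsOpen (range h') := by
    rw [← image_univ]
    exact LeafAux.open_image loc isOpen_univ hc'.continuousOn hinj'.injOn
  have hconn : IsConnected (range h') := isConnected_range hc'
  have hbb : BddBelow (range h') := ⟨-(Real.pi / 2), by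
    rintro _ ⟨x, rfl⟩; exact (Real.neg_pi_div_two_lt_arctan _).le⟩
  have hba : BddAbove (range h') := ⟨Real.pi / 2, by
    rintro _ ⟨x, rfl⟩; exact (Real.arctan_lt_pi_div_two _).le⟩
  set a := sInf (range h')
  set b := sSup (range h')
  have hr : range h' = Ioo a b := by
    apply Subset.antisymm
    · have h1 := subset_Icc_csInf_csSup hbb hba
      have := interior_mono h1
      rwa [hop.interior_eq, interior_Icc] at this
    · exact hconn.Ioo_csInf_csSup_subset hbb hba
  have hab : a < b := by
    obtain ⟨x, hx⟩ := hconn.nonempty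
    rw [hr] at hx
    exact hx.1.trans hx.2
  obtain ⟨E, hE1, hE2, hE3⟩ := LeafAux.mk_arc loc isOpen_univ (hc'.continuousOn)
    (I := Ioo a b) (by rw [← hr, ← image_univ]; exact hinj'.injOn.bijOn_image)
  let B := OpenPartialHomeomorph.univBall ((a + b) / 2) ((b - a) / 2)
  have hB : B.target = Ioo a b := by
    rw [OpenPartialHomeomorph.univBall_target _ (by linarith), Real.ball_eq_Ioo]
    congr 1 <;> ring
  have hBs : B.source = univ := OpenPartialHomeomorph.univBall_source _ _
  let K := E.trans' B.symm (by rw [hE2, OpenPartialHomeomorph.symm_source, hB])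
  exact ⟨K.toHomeomorphOfSourceEqUnivTargetEqUniv hE1 hBs⟩
end

/-- Metric form of a geodesic line foliation: `r` is the relation of being on the same leaf and
`γ x` is a unit speed parametrization of the leaf of `x` starting at `x`. -/
structure LeafAux.Fol {M : Type} [MetricSpace M] (r : M → M → Prop) (γ : M → ℝ → M) : Prop where
  equiv : Equivalence r
  zero : ∀ x, γ x 0 = x
  line : ∀ x s t, dist (γ x s) (γ x t) = |s - t|
  leaf : ∀ x y, r x y ↔ ∃ s, γ x s = y
  chart : ∀ x, ∃ Φ : OpenPartialHomeomorph M (ℝ × ℝ), x ∈ Φ.source ∧ Φ.target = univ ∧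
    ∀ c t t', r (Φ.symm (t, c)) (Φ.symm (t', c))

section
variable {M : Type} [MetricSpace M] {r : M → M → Prop} {γ : M → ℝ → M}

theorem LeafAux.Fol.isometry (h : LeafAux.Fol r γ) (x : M) : Isometry (γ x) :=
  Isometry.of_dist_eq fun s t => by rw [h.line, Real.dist_eq]

theorem LeafAux.Fol.plaque (h : LeafAux.Fol r γ) {Φ : OpenPartialHomeomorph M (ℝ × ℝ)}
    (hT : Φ.target = univ) (hΦ : ∀ c t t', r (Φ.symm (t, c)) (Φ.symm (t', c)))
    (x : M) {s₀ : ℝ} (hs₀ : γ x s₀ ∈ Φ.source) :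
    ∀ᶠ s in 𝓝 s₀, γ x s ∈ Φ.source ∧ (Φ (γ x s)).2 = (Φ (γ x s₀)).2 := by
  set c := (Φ (γ x s₀)).2 with hc
  set τ₀ := (Φ (γ x s₀)).1 with hτ
  have h0 : Φ.symm (τ₀, c) = γ x s₀ := Φ.left_inv hs₀
  have hr : ∀ τ, ∃ s, γ x s = Φ.symm (τ, c) := by
    intro τ
    rw [← h.leaf]
    refine h.equiv.trans ((h.leaf _ _).2 ⟨s₀, rfl⟩) ?_
    rw [← h0]
    exact hΦ c τ₀ τ
  choose σ hσ using hr
  have hcs : Continuous Φ.symm := by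
    have := Φ.continuousOn_symm
    rwa [hT, continuousOn_univ] at this
  have hσc : Continuous σ := by
    rw [(h.isometry x).isEmbedding.continuous_iff]
    have : γ x ∘ σ = fun τ => Φ.symm (τ, c) := funext hσ
    rw [this]
    fun_prop
  have hσi : Function.Injective σ := by
    intro a b hab
    have : Φ.symm (a, c) = Φ.symm (b, c) := by rw [← hσ, ← hσ, hab]
    have := Φ.symm.injOn (by simp [hT]) (by simp [hT]) this
    exact (Prod.ext_iff.1 this).1
  have hop := LeafAux.real_open_image isOpen_univ hσc.continuousOn hσi.injOn
  have hmem : s₀ ∈ σ '' univ := ⟨τ₀, trivial, (h.isometry x).injective ((hσ τ₀).trans h0)⟩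
  filter_upwards [hop.mem_nhds hmem]
  rintro _ ⟨τ, -, rfl⟩
  rw [hσ]
  refine ⟨Φ.map_target (by simp [hT]), ?_⟩
  rw [Φ.right_inv (by simp [hT])]

theorem LeafAux.Fol.plaque_const (h : LeafAux.Fol r γ) {Φ : OpenPartialHomeomorph M (ℝ × ℝ)}
    (hT : Φ.target = univ) (hΦ : ∀ c t t', r (Φ.symm (t, c)) (Φ.symm (t', c)))
    (x : M) {A : Set ℝ} (hA : IsPreconnected A) (hs : ∀ s ∈ A, γ x s ∈ Φ.source)
    {s t : ℝ} (hsA : s ∈ A) (htA : t ∈ A) : (Φ (γ x s)).2 = (Φ (γ x t)).2 := by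
  have : PreconnectedSpace A := isPreconnected_iff_preconnectedSpace.1 hA
  have hl : IsLocallyConstant (fun u : A => (Φ (γ x u)).2) := by
    rw [IsLocallyConstant.iff_eventually_eq]
    intro u
    have := h.plaque hT hΦ x (hs u u.2)
    filter_upwards [continuous_subtype_val.continuousAt.eventually this] with v hv
    exact hv.2
  exact hl.apply_eq_of_preconnectedSpace ⟨s, hsA⟩ ⟨t, htA⟩

theorem LeafAux.Fol.sat_open (h : LeafAux.Fol r γ) {O : Set M} (hO : IsOpen O) :
    IsOpen {y | ∃ x ∈ O, r x y} := by
  set S := {y | ∃ x ∈ O, r x y} with hS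
  rw [← subset_interior_iff_isOpen]
  rintro y ⟨x, hx, hxy⟩
  obtain ⟨s₁, rfl⟩ := (h.leaf x y).1 hxy
  let A := (γ x) ⁻¹' (interior S)
  have hAo : IsOpen A := isOpen_interior.preimage (h.isometry x).continuous
  have hA : A = univ := by
    refine IsClopen.eq_univ ⟨?_, hAo⟩ ?_
    · rw [← closure_subset_iff_isClosed]
      intro t ht
      obtain ⟨Φ, hΦs, hT, hΦ⟩ := h.chart (γ x t)
      obtain ⟨s, hs, hsA⟩ := mem_closure_iff_nhds.1 ht _ (h.plaque hT hΦ x hΦs)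
      obtain ⟨hs1, hs2⟩ := hs
      change γ x t ∈ interior S
      rw [mem_interior_iff_mem_nhds]
      have hcs : Continuous Φ.symm := by
        have := Φ.continuousOn_symm
        rwa [hT, continuousOn_univ] at this
      have hcont : ContinuousAt (fun y => Φ.symm ((Φ (γ x s)).1, (Φ y).2)) (γ x t) := by
        have h1 := Φ.continuousAt hΦs
        refine hcs.continuousAt.comp ?_
        exact continuousAt_const.prodMk h1.snd
      have hval : Φ.symm ((Φ (γ x s)).1, (Φ (γ x t)).2) = γ x s := by
        rw [← hs2]; exact Φ.left_inv hs1
      have hev := hcont.eventually (isOpen_interior.mem_nhds (by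
        change Φ.symm ((Φ (γ x s)).1, (Φ (γ x t)).2) ∈ interior S
        rw [hval]; exact hsA))
      filter_upwards [hev, Φ.open_source.mem_nhds hΦs] with z hz hzs
      obtain ⟨w, hw, hwz⟩ := interior_subset hz
      refine ⟨w, hw, h.equiv.trans hwz ?_⟩
      have := hΦ (Φ z).2 (Φ (γ x s)).1 (Φ z).1
      rwa [show ((Φ z).1, (Φ z).2) = Φ z from rfl, Φ.left_inv hzs] at this
    · refine ⟨0, ?_⟩
      change γ x 0 ∈ interior S
      rw [h.zero, mem_interior_iff_mem_nhds]
      exact mem_of_superset (hO.mem_nhds hx) fun z hz => ⟨z, hz, h.equiv.refl z⟩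
  have : s₁ ∈ A := hA ▸ mem_univ s₁
  exact this

theorem LeafAux.Fol.follow [LocallyCompactSpace M] [CompleteSpace M] (h : LeafAux.Fol r γ) {x : M}
    (u : Ultrafilter M) (hu : (u : Filter M) ≤ 𝓝 x) (s : ℝ) :
    ∃ p, r x p ∧ Tendsto (fun w => γ w s) u (𝓝 p) := by
  let S := {s : ℝ | ∃ p, r x p ∧ Tendsto (fun w => γ w s) u (𝓝 p)}
  suffices hS : S = univ by
    have : s ∈ S := hS ▸ mem_univ s
    exact this
  refine IsClopen.eq_univ ⟨?_, ?_⟩ ⟨0, x, h.equiv.refl x, ?_⟩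
  · rw [← closure_subset_iff_isClosed]
    intro s hs
    have key : ∀ ε > 0, ∃ s' p, |s - s'| < ε ∧ r x p ∧ Tendsto (fun w => γ w s') u (𝓝 p) := by
      intro ε hε
      obtain ⟨s', ⟨p, hp1, hp2⟩, hd⟩ := Metric.mem_closure_iff.1 hs ε hε
      exact ⟨s', p, by rwa [Real.dist_eq] at hd, hp1, hp2⟩
    have hcau : Cauchy (map (fun w => γ w s) (u : Filter M)) := by
      rw [Metric.cauchy_iff]
      refine ⟨inferInstance, fun ε hε => ?_⟩
      obtain ⟨s', p, h1, h2, h3⟩ := key (ε / 4) (by linarith)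
      refine ⟨ball p (ε / 2), ?_, ?_⟩
      · rw [mem_map]
        filter_upwards [h3 (ball_mem_nhds p (show 0 < ε / 4 by linarith))] with w hw
        have hw' : dist (γ w s') p < ε / 4 := hw
        have := dist_triangle (γ w s) (γ w s') p
        rw [h.line] at this
        change dist (γ w s) p < ε / 2
        linarith
      · intro a ha b hb
        have := dist_triangle_right a b p
        rw [mem_ball] at ha hb
        linarith
    obtain ⟨p, hp⟩ := CompleteSpace.complete hcau
    refine ⟨p, ?_, hp⟩
    have hcl : IsClosed (range (γ x)) := (h.isometry x).isClosedEmbedding.isClosed_range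
    have : p ∈ range (γ x) := by
      rw [← hcl.closure_eq, Metric.mem_closure_iff]
      intro ε hε
      obtain ⟨s', p', h1, h2, h3⟩ := key ε hε
      refine ⟨p', (h.leaf _ _).1 h2, ?_⟩
      have ht : Tendsto (fun w => dist (γ w s) (γ w s')) u (𝓝 (dist p p')) :=
        Tendsto.dist hp h3
      simp only [h.line] at ht
      rw [← tendsto_nhds_unique tendsto_const_nhds ht]
      exact h1
    exact (h.leaf _ _).2 this
  · rw [Metric.isOpen_iff]
    rintro s ⟨p, hp, hlim⟩
    obtain ⟨Φ, hΦs, hT, hΦ⟩ := h.chart p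
    obtain ⟨K, hK, hKs, hKc⟩ := local_compact_nhds (Φ.open_source.mem_nhds hΦs)
    obtain ⟨ε, hε, hb⟩ := Metric.mem_nhds_iff.1 hK
    refine ⟨ε / 2, by linarith, fun s' hs' => ?_⟩
    rw [mem_ball, Real.dist_eq] at hs'
    have hev : ∀ᶠ w in (u : Filter M), ∀ v ∈ uIcc s s', γ w v ∈ K := by
      filter_upwards [hlim (ball_mem_nhds p (show 0 < ε / 2 by linarith))] with w hw v hv
      apply hb
      have hw' : dist (γ w s) p < ε / 2 := hw
      have h1 := dist_triangle (γ w v) (γ w s) p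
      rw [h.line] at h1
      have h2 : |v - s| ≤ |s' - s| := abs_sub_left_of_mem_uIcc hv
      rw [mem_ball]
      linarith
    have hKu : ((u.map (fun w => γ w s') : Ultrafilter M) : Filter M) ≤ 𝓟 K := by
      rw [le_principal_iff]
      change ∀ᶠ w in (u : Filter M), γ w s' ∈ K
      filter_upwards [hev] with w hw
      exact hw s' right_mem_uIcc
    obtain ⟨p', hp'K, hp'⟩ := hKc.ultrafilter_le_nhds _ hKu
    have hlim' : Tendsto (fun w => γ w s') u (𝓝 p') := hp'
    refine ⟨p', h.equiv.trans hp ?_, hlim'⟩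
    have l1 := ((Φ.continuousAt hΦs).snd).tendsto.comp hlim
    have l2 := ((Φ.continuousAt (hKs hp'K)).snd).tendsto.comp hlim'
    have heq : (Φ p).2 = (Φ p').2 := by
      refine tendsto_nhds_unique_of_eventuallyEq l1 l2 ?_
      filter_upwards [hev] with w hw
      exact h.plaque_const hT hΦ w isPreconnected_uIcc (fun v hv => hKs (hw v hv))
        left_mem_uIcc right_mem_uIcc
    have := hΦ (Φ p).2 (Φ p).1 (Φ p').1
    nth_rewrite 2 [heq] at this
    rwa [show ((Φ p).1, (Φ p).2) = Φ p from rfl, show ((Φ p').1, (Φ p').2) = Φ p' from rfl,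
      Φ.left_inv hΦs, Φ.left_inv (hKs hp'K)] at this
  · simp only [h.zero]
    exact hu

theorem LeafAux.Fol.closed [LocallyCompactSpace M] [CompleteSpace M] (h : LeafAux.Fol r γ) :
    IsClosed {q : M × M | r q.1 q.2} := by
  rw [isClosed_iff_ultrafilter]
  rintro ⟨x, y⟩ u hu hr
  have hσ : ∀ q : M × M, ∃ s, r q.1 q.2 → γ q.1 s = q.2 := by
    intro q
    by_cases hq : r q.1 q.2
    · obtain ⟨s, hs⟩ := (h.leaf _ _).1 hq
      exact ⟨s, fun _ => hs⟩
    · exact ⟨0, fun h => absurd h hq⟩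
  choose σ hσ using hσ
  have hfst : Tendsto (fun q : M × M => q.1) u (𝓝 x) := (continuous_fst.tendsto (x, y)).mono_left hu
  have hsnd : Tendsto (fun q : M × M => q.2) u (𝓝 y) := (continuous_snd.tendsto (x, y)).mono_left hu
  have hr' : ∀ᶠ q in (u : Filter (M × M)), r q.1 q.2 := hr
  have hb : ∀ᶠ q in (u : Filter (M × M)), σ q ∈ Icc (-(dist x y + 1)) (dist x y + 1) := by
    have := (hfst.dist hsnd).eventually_lt_const (show dist x y < dist x y + 1 by linarith)
    filter_upwards [this, hr'] with q h1 h2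
    rw [mem_Icc, ← abs_le]
    have h3 := h.line q.1 0 (σ q)
    rw [h.zero, hσ q h2, zero_sub, abs_neg] at h3
    rw [← h3]; exact h1.le
  obtain ⟨s, -, hs⟩ := isCompact_Icc.ultrafilter_le_nhds (u.map σ) (le_principal_iff.2 hb)
  have hs' : Tendsto σ u (𝓝 s) := hs
  obtain ⟨p, hp, hlim⟩ := h.follow (u.map Prod.fst) hfst s
  have hlim' : Tendsto (fun q : M × M => γ q.1 s) u (𝓝 p) := hlim
  have hz : Tendsto (fun q : M × M => dist q.2 (γ q.1 s)) u (𝓝 0) := by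
    have : Tendsto (fun q : M × M => |σ q - s|) u (𝓝 0) := by
      have h1 := (hs'.sub_const s).abs
      simpa using h1
    refine this.congr' ?_
    filter_upwards [hr'] with q hq
    rw [← h.line q.1, hσ q hq]
  have := tendsto_nhds_unique hz (hsnd.dist hlim')
  have hyp : y = p := dist_eq_zero.1 this.symm
  change r x y
  rw [hyp]; exact hp

theorem LeafAux.Fol.isOpenQuotientMap (h : LeafAux.Fol r γ) :
    IsOpenQuotientMap (Quot.mk r) := by
  refine ⟨Quot.mk_surjective, continuous_quot_mk, fun O hO => ?_⟩
  rw [← isQuotientMap_quot_mk.isOpen_preimage]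
  convert h.sat_open hO using 1
  ext y
  constructor
  · rintro ⟨x, hx, hxy⟩
    exact ⟨x, hx, (h.equiv.quot_mk_eq_iff _ _).1 hxy⟩
  · rintro ⟨x, hx, hxy⟩
    exact ⟨x, hx, Quot.sound hxy⟩

theorem LeafAux.Fol.t2 [LocallyCompactSpace M] [CompleteSpace M] (h : LeafAux.Fol r γ) :
    T2Space (Quot r) := by
  rw [t2Space_iff_of_isOpenQuotientMap h.isOpenQuotientMap]
  convert h.closed using 2
  ext q
  exact h.equiv.quot_mk_eq_iff _ _

theorem LeafAux.Fol.locChart (h : LeafAux.Fol r γ) (q : Quot r) :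
    ∃ (E : OpenPartialHomeomorph (Quot r) ℝ) (a b : ℝ), a < b ∧ E.target = Ioo a b ∧
      q ∈ E.source := by
  obtain ⟨x, rfl⟩ := Quot.mk_surjective q
  obtain ⟨Φ, hΦs, hT, hΦ⟩ := h.chart x
  set τ := (Φ x).1 with hτ
  set c₀ := (Φ x).2 with hc₀
  have hx : Φ.symm (τ, c₀) = x := Φ.left_inv hΦs
  have hcs : Continuous Φ.symm := by
    have := Φ.continuousOn_symm
    rwa [hT, continuousOn_univ] at this
  obtain ⟨ε, hε, hb⟩ := Metric.mem_nhds_iff.1 (Φ.open_source.mem_nhds hΦs)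
  have hg : Continuous (fun c => Φ.symm (τ, c)) := by fun_prop
  have hnear : ∀ᶠ c in 𝓝 c₀, Φ.symm (τ, c) ∈ ball x (ε / 3) := by
    apply hg.continuousAt
    change ball x (ε / 3) ∈ 𝓝 (Φ.symm (τ, c₀))
    rw [hx]
    exact ball_mem_nhds x (by linarith)
  obtain ⟨δ, hδ, hδb⟩ := Metric.mem_nhds_iff.1 hnear
  rw [Real.ball_eq_Ioo] at hδb
  let j : ℝ → Quot r := fun c => Quot.mk r (Φ.symm (τ, c))
  have hj : Continuous j := continuous_quot_mk.comp hg
  have hji : InjOn j (Ioo (c₀ - δ) (c₀ + δ)) := by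
    intro c hc d hd hcd
    have hr := (h.equiv.quot_mk_eq_iff _ _).1 hcd
    obtain ⟨s, hs⟩ := (h.leaf _ _).1 hr
    have h1 : dist (Φ.symm (τ, c)) x < ε / 3 := hδb hc
    have h2 : dist (Φ.symm (τ, d)) x < ε / 3 := hδb hd
    set w := Φ.symm (τ, c) with hw
    have hsd : |s| < 2 * ε / 3 := by
      have h3 := h.line w s 0
      rw [h.zero, hs, sub_zero] at h3
      rw [← h3]
      have := dist_triangle_right (Φ.symm (τ, d)) w x
      linarith
    have hall : ∀ v ∈ uIcc 0 s, γ w v ∈ Φ.source := by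
      intro v hv
      apply hb
      have h3 := h.line w v 0
      rw [h.zero] at h3
      have h4 : |v - 0| ≤ |s - 0| := abs_sub_left_of_mem_uIcc hv
      rw [sub_zero s] at h4
      have := dist_triangle (γ w v) w x
      rw [mem_ball]
      linarith
    have := h.plaque_const hT hΦ w isPreconnected_uIcc hall left_mem_uIcc right_mem_uIcc
    rw [h.zero, hs, hw, Φ.right_inv (by simp [hT]), Φ.right_inv (by simp [hT])] at this
    exact this
  have hjo : ∀ O : Set ℝ, IsOpen O → IsOpen (j '' O) := by
    intro O hO
    have : j '' O = Quot.mk r '' (Φ.symm '' (univ ×ˢ O)) := by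
      ext q
      constructor
      · rintro ⟨c, hc, rfl⟩
        exact ⟨_, ⟨(τ, c), ⟨trivial, hc⟩, rfl⟩, rfl⟩
      · rintro ⟨_, ⟨⟨t, c⟩, ⟨-, hc⟩, rfl⟩, rfl⟩
        exact ⟨c, hc, Quot.sound (hΦ c τ t)⟩
    rw [this]
    apply h.isOpenQuotientMap.isOpenMap
    exact Φ.symm.isOpen_image_of_subset_source (isOpen_univ.prod hO) (by simp [hT])
  let e := OpenPartialHomeomorph.ofContinuousOpenRestrict
    (BijOn.toPartialEquiv j (Ioo (c₀ - δ) (c₀ + δ)) _ hji.bijOn_image) hj.continuousOn (by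
      intro O hO
      change IsOpen ((fun x : Ioo (c₀ - δ) (c₀ + δ) => j x) '' O)
      have : (fun x : Ioo (c₀ - δ) (c₀ + δ) => j x) '' O = j '' (Subtype.val '' O) :=
        (image_image _ _ _).symm
      rw [this]
      exact hjo _ (isOpen_Ioo.isOpenMap_subtype_val O hO)) isOpen_Ioo
  refine ⟨e.symm, c₀ - δ, c₀ + δ, by linarith, rfl, ?_⟩
  change Quot.mk r x ∈ j '' Ioo (c₀ - δ) (c₀ + δ)
  exact ⟨c₀, ⟨by linarith, by linarith⟩, by simp only [j]; rw [hx]⟩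

theorem LeafAux.Fol.lift [SimplyConnectedSpace M] [LocallyPathConnectedSpace M]
    (h : LeafAux.Fol r γ) (T : ℝ) (f : Quot r → AddCircle T) (hf : Continuous f) :
    ∃ F : Quot r → ℝ, Continuous F ∧ ∀ x, (F x : AddCircle T) = f x := by
  obtain ⟨x₀⟩ : Nonempty M := inferInstance
  let f' : C(M, AddCircle T) := ⟨fun x => f (Quot.mk r x), hf.comp continuous_quot_mk⟩
  obtain ⟨e₀, he₀⟩ := QuotientAddGroup.mk_surjective (f' x₀)
  obtain ⟨F, ⟨-, hF⟩, -⟩ :=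
    (AddCircle.isCoveringMap_coe T).existsUnique_continuousMap_lifts f' x₀ e₀ he₀
  have hF' : ∀ x, (F x : AddCircle T) = f (Quot.mk r x) := fun x => congrFun hF x
  have hconst : ∀ x y, r x y → F x = F y := by
    intro x y hxy
    obtain ⟨s, rfl⟩ := (h.leaf _ _).1 hxy
    have := (AddCircle.isCoveringMap_coe T).eq_of_comp_eq (g₁ := fun _ : ℝ => F x)
      (g₂ := fun s => F (γ x s)) continuous_const (F.continuous.comp (h.isometry x).continuous)
      (by
        funext s
        simp only [Function.comp]
        rw [hF', hF']
        congr 1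
        exact Quot.sound ((h.leaf _ _).2 ⟨s, rfl⟩)) 0 (by rw [h.zero])
    exact congrFun this s
  refine ⟨Quot.lift F hconst, continuous_quot_lift hconst F.continuous, ?_⟩
  intro q
  obtain ⟨x, rfl⟩ := Quot.mk_surjective q
  exact hF' x
end

/-- Let `F` be a geodesic line foliation of a complete Riemannian
plane `M`. Then the leaf space `M/F` (the quotient of `M` by the relation identifying
points lying on a common leaf), equipped with the quotient topology, is Hausdorff and
homeomorphic to the real line `ℝ`. -/
theorem leaf_space_hausdorff_and_homeomorphic_real_line
    (S : RiemannianSurface)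
    (hplane : Nonempty (S.M ≃ₜ (ℝ × ℝ)))
    (F : GeodesicLineFoliation S) :
    T2Space (Quot (fun x y : S.M => ∃ L ∈ F.leaves, x ∈ L ∧ y ∈ L)) ∧
    Nonempty ((Quot (fun x y : S.M => ∃ L ∈ F.leaves, x ∈ L ∧ y ∈ L)) ≃ₜ ℝ) := by
  obtain ⟨e⟩ := hplane
  haveI := S.complete
  haveI : LocallyCompactSpace S.M := e.isClosedEmbedding.locallyCompactSpace
  haveI : ContractibleSpace S.M := e.contractibleSpace
  haveI : SimplyConnectedSpace S.M := inferInstance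
  haveI : LocallyPathConnectedSpace S.M := e.symm.isQuotientMap.locallyPathConnectedSpace
  haveI : SecondCountableTopology S.M := e.secondCountableTopology
  have hγ : ∀ x : S.M, ∃ g : ℝ → S.M, g 0 = x ∧ IsLine g ∧ Set.range g ∈ F.leaves := by
    intro x
    obtain ⟨L, hL, hx⟩ := F.covers x
    obtain ⟨g, hg, -, rfl⟩ := F.leaf_is_geodesic_line L hL
    obtain ⟨s₀, rfl⟩ := hx
    refine ⟨fun s => g (s₀ + s), by simp, fun s t => (hg _ _).trans (by congr 1; ring), ?_⟩
    have : Set.range (fun s => g (s₀ + s)) = Set.range g :=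
      (Equiv.addLeft s₀).surjective.range_comp g
    rw [this]
    exact hL
  choose γ hγ0 hγl hγr using hγ
  have h : LeafAux.Fol (fun x y : S.M => ∃ L ∈ F.leaves, x ∈ L ∧ y ∈ L) γ := by
    refine ⟨⟨?_, ?_, ?_⟩, hγ0, hγl, ?_, ?_⟩
    · intro x
      obtain ⟨L, hL, hx⟩ := F.covers x
      exact ⟨L, hL, hx, hx⟩
    · rintro x y ⟨L, hL, hx, hy⟩
      exact ⟨L, hL, hy, hx⟩
    · rintro x y z ⟨L, hL, hx, hy⟩ ⟨L', hL', hy', hz⟩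
      obtain rfl := F.eq_of_inter L hL L' hL' ⟨y, hy, hy'⟩
      exact ⟨L, hL, hx, hz⟩
    · intro x y
      constructor
      · rintro ⟨L, hL, hx, hy⟩
        obtain rfl := F.eq_of_inter L hL _ (hγr x) ⟨x, hx, 0, hγ0 x⟩
        exact hy
      · rintro ⟨s, rfl⟩
        exact ⟨_, hγr x, ⟨0, hγ0 x⟩, ⟨s, rfl⟩⟩
    · intro x
      obtain ⟨U, hU, hx, φ, hφ⟩ := F.locally_trivial x
      have ho : Topology.IsOpenEmbedding (Subtype.val ∘ φ.symm) :=
        hU.isOpenEmbedding_subtypeVal.comp φ.symm.isOpenEmbedding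
      refine ⟨(ho.toOpenPartialHomeomorph _).symm, ?_, ?_, ?_⟩
      · simp only [OpenPartialHomeomorph.symm_source,
          Topology.IsOpenEmbedding.toOpenPartialHomeomorph_target]
        exact ⟨φ ⟨x, hx⟩, by simp⟩
      · simp
      · intro c t t'
        obtain ⟨L, hL, hc⟩ := hφ c
        exact ⟨L, hL, hc t, hc t'⟩
  haveI := h.t2
  haveI : ConnectedSpace S.M := inferInstance
  haveI : ConnectedSpace (Quot (fun x y : S.M => ∃ L ∈ F.leaves, x ∈ L ∧ y ∈ L)) :=
    Quot.mk_surjective.connectedSpace continuous_quot_mk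
  haveI : LindelofSpace (Quot (fun x y : S.M => ∃ L ∈ F.leaves, x ∈ L ∧ y ∈ L)) := by
    constructor
    have := (isLindelof_univ (X := S.M)).image
      (continuous_quot_mk (r := fun x y : S.M => ∃ L ∈ F.leaves, x ∈ L ∧ y ∈ L))
    rwa [Set.image_univ, Quot.mk_surjective.range_eq] at this
  exact ⟨h.t2, LeafAux.homeo_real h.locChart (fun T _ f hf => h.lift T f hf)⟩
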